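/- arXiv:2505.07024 — 2 statements merged into one kernel-verified Lean document; each statement's English description precedes it below -/
import Mathlib

section
/- For 0 < a < 1 and m > 0, the Kilbas–Saigo function satisfies the two-sided bound 1/(1+Γ(1−a)x) ≤ E_{a,m,m−1}(−x) ≤ 1/(1 + (Γ(1+a(m−1))/Γ(1+am))·x) for all x ≥ 0. In particular 0 < E_{a,m,m−1}(−x) ≤ 1. -/
open Real Finset

/-!
The coefficients of `E = E_{a,m,m-1}` satisfy a Gamma-ratio recurrence which, summed up, says two
things about `E`: with the Beta integral it is a Volterra equation
`E(z) = 1 + z / Γ(a) ∫₀¹ s^{a(m-1)} (1-s)^{a-1} E(s^{am} z) ds`, and with the regularised Beta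
integral it is an eigenvalue equation
`E(z) + a ∫₀¹ (E(z) - E(s^{am} z)) (1-s)^{-a-1} ds = 1 + Γ(1-a) z E(z)` for a Marchaud derivative.
The Marchaud derivative is negative at a negative minimum, whereas the right side is nonnegative
there; this minimum principle, applied to `E` and then to `z ↦ E(rz) - E(z)` with `0 ≤ r ≤ 1`, shows
that `E` is nonnegative and increasing on `(-∞, 0]`.
By monotonicity, replacing `E(s^{am} z)` by `E(z)` in the eigenvalue equation gives the lower bound,
and doing so in the Volterra equation gives the upper bound.
-/

open MeasureTheory Filter Topology

section BetaIntegral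

theorem ofReal_rpow_mul_one_sub_rpow (u v : ℝ) {s : ℝ} (hs : s ∈ Set.Ioo (0 : ℝ) 1) :
    ((s ^ (u - 1) * (1 - s) ^ (v - 1) : ℝ) : ℂ) =
      (s : ℂ) ^ ((u : ℂ) - 1) * (1 - (s : ℂ)) ^ ((v : ℂ) - 1) := by
  rw [Complex.ofReal_mul, Complex.ofReal_cpow hs.1.le, Complex.ofReal_cpow (sub_nonneg.2 hs.2.le)]
  push_cast
  rfl

variable {u v : ℝ}

theorem integrableOn_rpow_mul_one_sub_rpow (hu : 0 < u) (hv : 0 < v) :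
    IntegrableOn (fun s : ℝ => s ^ (u - 1) * (1 - s) ^ (v - 1)) (Set.Ioo 0 1) := by
  have hconv := Complex.betaIntegral_convergent (u := u) (v := v) (by simpa) (by simpa)
  rw [intervalIntegrable_iff_integrableOn_Ioo_of_le zero_le_one] at hconv
  simpa [IntegrableOn] using (hconv.congr_fun
    (fun s hs => (ofReal_rpow_mul_one_sub_rpow u v hs).symm) measurableSet_Ioo).re

theorem integral_rpow_mul_one_sub_rpow (hu : 0 < u) (hv : 0 < v) :
    ∫ s in Set.Ioo (0 : ℝ) 1, s ^ (u - 1) * (1 - s) ^ (v - 1) =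
      Gamma u * Gamma v / Gamma (u + v) := by
  have hbeta := Complex.betaIntegral_eq_Gamma_mul_div u v (by simpa) (by simpa)
  rw [Complex.betaIntegral, intervalIntegral.integral_of_le zero_le_one,
    integral_Ioc_eq_integral_Ioo, setIntegral_congr_fun measurableSet_Ioo
      (fun s hs => (ofReal_rpow_mul_one_sub_rpow u v hs).symm),
    integral_complex_ofReal, ← Complex.ofReal_add, Complex.Gamma_ofReal, Complex.Gamma_ofReal,
    Complex.Gamma_ofReal] at hbeta
  exact_mod_cast hbeta

-- The Beta integral `∫ s^{x-1} (1-s)^{v-1}` tends to `0` by dominated convergence.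
theorem tendsto_Gamma_div_Gamma_add_atTop (hv : 0 < v) :
    Tendsto (fun x => Gamma x / Gamma (x + v)) atTop (𝓝 0) := by
  have hlim : Tendsto (fun x : ℝ => ∫ s in Set.Ioo (0 : ℝ) 1, s ^ (x - 1) * (1 - s) ^ (v - 1))
      atTop (𝓝 (∫ _ in Set.Ioo (0 : ℝ) 1, 0)) := by
    refine tendsto_integral_filter_of_dominated_convergence _ (.of_forall fun x => ?_) ?_
      (integrableOn_rpow_mul_one_sub_rpow one_pos hv) ?_
    · exact (by fun_prop : Measurable _).aestronglyMeasurable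
    · filter_upwards [eventually_ge_atTop 1] with x hx
      filter_upwards [ae_restrict_mem measurableSet_Ioo] with s hs
      have hs' : 0 ≤ 1 - s := sub_nonneg.2 hs.2.le
      rw [Real.norm_of_nonneg (mul_nonneg (rpow_nonneg hs.1.le _) (rpow_nonneg hs' _))]
      exact mul_le_mul_of_nonneg_right
        (rpow_le_rpow_of_exponent_ge hs.1 hs.2.le (by linarith)) (rpow_nonneg hs' _)
    · filter_upwards [ae_restrict_mem measurableSet_Ioo] with s hs
      have hpow := (tendsto_rpow_atTop_of_base_lt_one s (by linarith [hs.1]) hs.2).comp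
        (tendsto_atTop_add_const_right atTop (-1) tendsto_id)
      simpa [sub_eq_add_neg] using hpow.mul_const ((1 - s) ^ (v - 1))
  rw [integral_zero] at hlim
  have hdiv := hlim.div_const (Gamma v)
  rw [zero_div] at hdiv
  refine hdiv.congr' ?_
  filter_upwards [eventually_gt_atTop 0] with x hx
  have hGv := (Gamma_pos_of_pos hv).ne'
  rw [integral_rpow_mul_one_sub_rpow hx hv]
  field_simp

end BetaIntegral

section RegularizedBetaIntegral

variable {a p s : ℝ}

theorem one_sub_rpow_nonneg (hp : 0 ≤ p) (hs : s ∈ Set.Ioo (0 : ℝ) 1) : 0 ≤ 1 - s ^ p :=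
  sub_nonneg.2 (rpow_le_one hs.1.le hs.2.le hp)

theorem one_sub_rpow_le (hs : s ∈ Set.Ioo (0 : ℝ) 1) : 1 - s ^ p ≤ max 1 p * (1 - s) := by
  rcases le_total 1 p with hp | hp
  · have hbernoulli := one_add_mul_self_le_rpow_one_add (s := s - 1) (by linarith [hs.1]) hp
    rw [add_sub_cancel] at hbernoulli
    rw [max_eq_right hp]
    linarith
  · have hanti := rpow_le_rpow_of_exponent_ge hs.1 hs.2.le hp
    rw [rpow_one] at hanti
    rw [max_eq_left hp]
    linarith

theorem one_sub_rpow_mul_one_sub_rpow_le (c : ℝ) (hs : s ∈ Set.Ioo (0 : ℝ) 1) :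
    (1 - s ^ p) * (1 - s) ^ c ≤ max 1 p * (1 - s) ^ (1 + c) := by
  have hs' : 0 < 1 - s := sub_pos.2 hs.2
  calc (1 - s ^ p) * (1 - s) ^ c ≤ max 1 p * (1 - s) * (1 - s) ^ c :=
        mul_le_mul_of_nonneg_right (one_sub_rpow_le hs) (rpow_nonneg hs'.le _)
    _ = max 1 p * (1 - s) ^ (1 + c) := by rw [rpow_add hs', rpow_one, mul_assoc]

theorem one_sub_rpow_mul_one_sub_rpow_nonneg (c : ℝ) (hp : 0 ≤ p) (hs : s ∈ Set.Ioo (0 : ℝ) 1) :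
    0 ≤ (1 - s ^ p) * (1 - s) ^ c :=
  mul_nonneg (one_sub_rpow_nonneg hp hs) (rpow_nonneg (sub_nonneg.2 hs.2.le) _)

theorem integrableOn_one_sub_rpow_mul_one_sub_rpow (ha : a < 1) (hp : 0 ≤ p) :
    IntegrableOn (fun s : ℝ => (1 - s ^ p) * (1 - s) ^ (-a - 1)) (Set.Ioo 0 1) := by
  have hdom := (integrableOn_rpow_mul_one_sub_rpow one_pos (sub_pos.2 ha)).const_mul (max 1 p)
  refine hdom.mono' (by fun_prop : Measurable _).aestronglyMeasurable ?_
  filter_upwards [ae_restrict_mem measurableSet_Ioo] with s hs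
  rw [Real.norm_of_nonneg (one_sub_rpow_mul_one_sub_rpow_nonneg _ hp hs), sub_self, rpow_zero,
    one_mul, show 1 - a - 1 = 1 + (-a - 1) by ring]
  exact one_sub_rpow_mul_one_sub_rpow_le _ hs

theorem tendsto_one_sub_rpow_mul_one_sub_rpow (ha : a < 1) (hp : 0 ≤ p) :
    Tendsto (fun s : ℝ => (1 - s ^ p) * (1 - s) ^ (-a)) (𝓝[<] 1) (𝓝 0) := by
  have hbound : Tendsto (fun s : ℝ => max 1 p * (1 - s) ^ (1 + -a)) (𝓝[<] 1) (𝓝 0) := by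
    have hcont : ContinuousAt (fun s : ℝ => max 1 p * (1 - s) ^ (1 + -a)) 1 :=
      continuousAt_const.mul (ContinuousAt.rpow_const (by fun_prop) (Or.inr (by linarith)))
    simpa [zero_rpow (show 1 + -a ≠ 0 by linarith)] using
      hcont.tendsto.mono_left nhdsWithin_le_nhds
  have hIoo : Set.Ioo (0 : ℝ) 1 ∈ 𝓝[<] (1 : ℝ) := Ioo_mem_nhdsLT one_pos
  refine tendsto_of_tendsto_of_tendsto_of_le_of_le' tendsto_const_nhds hbound ?_ ?_
  · filter_upwards [hIoo] with s hs using one_sub_rpow_mul_one_sub_rpow_nonneg _ hp hs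
  · filter_upwards [hIoo] with s hs using one_sub_rpow_mul_one_sub_rpow_le _ hs

theorem hasDerivAt_one_sub_rpow_mul_one_sub_rpow (a p : ℝ) (hs : s ∈ Set.Ioo (0 : ℝ) 1) :
    HasDerivAt (fun s : ℝ => (1 - s ^ p) * (1 - s) ^ (-a))
      (a * ((1 - s ^ p) * (1 - s) ^ (-a - 1)) - p * (s ^ (p - 1) * (1 - s) ^ (1 - a - 1))) s := by
  have hleft : HasDerivAt (fun s : ℝ => 1 - s ^ p) (-(p * s ^ (p - 1))) s :=
    (hasDerivAt_rpow_const (Or.inl hs.1.ne')).const_sub 1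
  have hright : HasDerivAt (fun s : ℝ => (1 - s) ^ (-a)) (-1 * -a * (1 - s) ^ (-a - 1)) s :=
    ((hasDerivAt_id s).const_sub 1).rpow_const (Or.inl (sub_pos.2 hs.2).ne')
  convert! hleft.mul hright using 1
  rw [show 1 - a - 1 = -a by ring]
  ring

-- Integration by parts reduces this to the Beta integral with parameters `p` and `1 - a`.
theorem mul_integral_one_sub_rpow_mul_one_sub_rpow (ha : a < 1) (hp : 0 ≤ p) :
    a * ∫ s in Set.Ioo (0 : ℝ) 1, (1 - s ^ p) * (1 - s) ^ (-a - 1) =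
      Gamma (1 - a) * Gamma (1 + p) / Gamma (1 + p - a) - 1 := by
  have ha' : 0 < 1 - a := sub_pos.2 ha
  rcases hp.eq_or_lt with rfl | hp
  · simp [(Gamma_pos_of_pos ha').ne']
  have hint := (integrableOn_one_sub_rpow_mul_one_sub_rpow ha hp.le).const_mul a
  have hbeta := (integrableOn_rpow_mul_one_sub_rpow hp ha').const_mul p
  have hzero : Tendsto (fun s : ℝ => (1 - s ^ p) * (1 - s) ^ (-a)) (𝓝[>] 0) (𝓝 1) := by
    have hcont : ContinuousAt (fun s : ℝ => (1 - s ^ p) * (1 - s) ^ (-a)) 0 :=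
      (continuousAt_const.sub (continuousAt_id.rpow_const (Or.inr hp.le))).mul
        (ContinuousAt.rpow_const (by fun_prop) (Or.inl (by simp)))
    simpa [zero_rpow hp.ne'] using hcont.tendsto.mono_left nhdsWithin_le_nhds
  have hparts := intervalIntegral.integral_eq_sub_of_hasDerivAt_of_tendsto one_pos
    (fun s hs => hasDerivAt_one_sub_rpow_mul_one_sub_rpow a p hs)
    ((intervalIntegrable_iff_integrableOn_Ioo_of_le zero_le_one).2 (hint.sub hbeta))
    hzero (tendsto_one_sub_rpow_mul_one_sub_rpow ha hp.le)
  rw [intervalIntegral.integral_of_le zero_le_one, integral_Ioc_eq_integral_Ioo,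
    integral_sub hint hbeta, integral_const_mul, integral_const_mul,
    integral_rpow_mul_one_sub_rpow hp ha', sub_eq_iff_eq_add] at hparts
  rw [hparts, show 1 + p - a = p + (1 - a) by ring, add_comm 1 p, Gamma_add_one hp.ne']
  ring

end RegularizedBetaIntegral

section TermwiseIntegration

theorem hasSum_mul_integral_of_nonneg {ι α : Type*} [Countable ι] [MeasurableSpace α]
    {μ : Measure α} {f : ι → α → ℝ} {c : ι → ℝ} (hf : ∀ i, 0 ≤ᵐ[μ] f i)
    (hint : ∀ i, Integrable (f i) μ) (hsum : Summable fun i => c i * ∫ x, f i x ∂μ) :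
    HasSum (fun i => c i * ∫ x, f i x ∂μ) (∫ x, ∑' i, c i * f i x ∂μ) := by
  have hnorm (i : ι) : ∫ x, ‖c i * f i x‖ ∂μ = |c i * ∫ x, f i x ∂μ| := by
    rw [abs_mul, abs_of_nonneg (integral_nonneg_of_ae (hf i)), ← integral_const_mul]
    refine integral_congr_ae ?_
    filter_upwards [hf i] with x hx
    rw [norm_mul, Real.norm_of_nonneg hx, Real.norm_eq_abs]
  simpa only [integral_const_mul] using
    hasSum_integral_of_summable_integral_norm (fun i => (hint i).const_mul (c i))
      (hsum.abs.congr fun i => (hnorm i).symm)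

theorem summable_mul_mul_pow_of_mem_Icc {c : ℕ → ℝ} {z t : ℝ}
    (hc : Summable fun n => c n * z ^ n) (ht : t ∈ Set.Icc (0 : ℝ) 1) :
    Summable fun n => c n * (t * z) ^ n := by
  refine .of_norm_bounded hc.norm fun n => ?_
  rw [mul_pow, mul_left_comm, norm_mul, norm_pow, Real.norm_of_nonneg ht.1]
  exact mul_le_of_le_one_left (norm_nonneg _) (pow_le_one₀ ht.1 ht.2)

end TermwiseIntegration

section MarchaudDerivative

/-- The Marchaud fractional derivative of order `a` of `t ↦ f (z t ^ b)` at `t = 1`, multiplied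
by `Γ(1 - a)`. It is used for functions of `z`, as the variable `t` enters through `z t ^ b` only;
the integral has the junk value `0` when it diverges. -/
noncomputable def marchaudDeriv (a b : ℝ) (f : ℝ → ℝ) (z : ℝ) : ℝ :=
  f z + a * ∫ s in Set.Ioo (0 : ℝ) 1, (f z - f (s ^ b * z)) * (1 - s) ^ (-a - 1)

variable {a b z : ℝ} {f : ℝ → ℝ}

theorem rpow_mem_Icc {s : ℝ} (hb : 0 ≤ b) (hs : s ∈ Set.Ioo (0 : ℝ) 1) :
    s ^ b ∈ Set.Icc (0 : ℝ) 1 :=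
  ⟨rpow_nonneg hs.1.le b, rpow_le_one hs.1.le hs.2.le hb⟩

theorem mul_mem_Icc_of_nonpos {t : ℝ} (hz : z ≤ 0) (ht : t ∈ Set.Icc (0 : ℝ) 1) :
    t * z ∈ Set.Icc z 0 :=
  ⟨le_mul_of_le_one_left hz ht.2, mul_nonpos_of_nonneg_of_nonpos ht.1 hz⟩

theorem marchaudDeriv_le_self (ha : 0 ≤ a) (h : ∀ s ∈ Set.Ioo (0 : ℝ) 1, f z ≤ f (s ^ b * z)) :
    marchaudDeriv a b f z ≤ f z := by
  have hint : ∫ s in Set.Ioo (0 : ℝ) 1, (f z - f (s ^ b * z)) * (1 - s) ^ (-a - 1) ≤ 0 :=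
    setIntegral_nonpos measurableSet_Ioo fun s hs => mul_nonpos_of_nonpos_of_nonneg
      (sub_nonpos.2 (h s hs)) (rpow_nonneg (sub_nonneg.2 hs.2.le) _)
  exact add_le_of_nonpos_right (mul_nonpos_of_nonneg_of_nonpos ha hint)

theorem nonneg_of_marchaudDeriv_nonneg (ha : 0 ≤ a) (hb : 0 ≤ b) (hz : z ≤ 0)
    (hf : ContinuousOn f (Set.Icc z 0))
    (h : ∀ w ∈ Set.Icc z 0, f w < 0 → 0 ≤ marchaudDeriv a b f w) : 0 ≤ f z := by
  obtain ⟨w, hw, hmin⟩ := isCompact_Icc.exists_isMinOn (Set.nonempty_Icc.2 hz) hf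
  by_contra! hneg
  have hfw : f w < 0 := (hmin (Set.left_mem_Icc.2 hz)).trans_lt hneg
  have hle : marchaudDeriv a b f w ≤ f w := marchaudDeriv_le_self ha fun s hs =>
    hmin (Set.Icc_subset_Icc_left hw.1 (mul_mem_Icc_of_nonpos hw.2 (rpow_mem_Icc hb hs)))
  exact ((h w hw hfw).trans hle).not_gt hfw

theorem marchaudDeriv_tsum {c : ℕ → ℝ} {A : ℝ} (ha0 : 0 < a) (ha1 : a < 1) (hb : 0 ≤ b)
    (hc : Summable fun n => c n * z ^ n)
    (hA : HasSum (fun n : ℕ => c n * z ^ n *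
      (Gamma (1 - a) * Gamma (1 + b * n) / Gamma (1 + b * n - a))) A) :
    marchaudDeriv a b (fun w => ∑' n, c n * w ^ n) z = A := by
  have hbn (n : ℕ) : 0 ≤ b * n := by positivity
  have hterm : HasSum (fun n : ℕ => c n * z ^ n *
      ∫ s in Set.Ioo (0 : ℝ) 1, (1 - s ^ (b * n)) * (1 - s) ^ (-a - 1))
      ((A - ∑' n, c n * z ^ n) / a) := by
    refine ((hA.sub hc.hasSum).div_const a).congr_fun fun n => ?_
    rw [← mul_sub_one, ← mul_integral_one_sub_rpow_mul_one_sub_rpow ha1 (hbn n)]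
    field_simp
  have hsum := (hasSum_mul_integral_of_nonneg
    (fun n => (ae_restrict_mem measurableSet_Ioo).mono fun s hs =>
      one_sub_rpow_mul_one_sub_rpow_nonneg (-a - 1) (hbn n) hs)
    (fun n => integrableOn_one_sub_rpow_mul_one_sub_rpow ha1 (hbn n)) hterm.summable).unique hterm
  have hcongr : Set.EqOn
      (fun s : ℝ => ∑' n : ℕ, c n * z ^ n * ((1 - s ^ (b * n)) * (1 - s) ^ (-a - 1)))
      (fun s => (∑' n, c n * z ^ n - ∑' n, c n * (s ^ b * z) ^ n) * (1 - s) ^ (-a - 1))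
      (Set.Ioo 0 1) := fun s hs => by
    simp only
    rw [← hc.tsum_sub (summable_mul_mul_pow_of_mem_Icc hc (rpow_mem_Icc hb hs)), ← tsum_mul_right]
    refine tsum_congr fun n => ?_
    rw [rpow_mul hs.1.le, rpow_natCast]
    ring
  rw [marchaudDeriv, ← setIntegral_congr_fun measurableSet_Ioo hcongr, hsum]
  field_simp
  ring

end MarchaudDerivative

section KilbasSaigo

/-- The `n`-th power series coefficient of the Kilbas–Saigo function `E_{a,m,l}`. -/
noncomputable def kilbasSaigoCoeff (a m l : ℝ) (n : ℕ) : ℝ :=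
  ∏ k ∈ range n, Gamma (1 + a * (k * m + l)) / Gamma (1 + a * (k * m + l + 1))

/-- The Kilbas–Saigo function `E_{a,m,l}` on the real line. -/
noncomputable def kilbasSaigo (a m l z : ℝ) : ℝ :=
  ∑' n : ℕ, kilbasSaigoCoeff a m l n * z ^ n

theorem kilbasSaigoCoeff_zero (a m l : ℝ) : kilbasSaigoCoeff a m l 0 = 1 :=
  prod_range_zero _

theorem kilbasSaigoCoeff_succ (a m l : ℝ) (n : ℕ) :
    kilbasSaigoCoeff a m l (n + 1) = kilbasSaigoCoeff a m l n *
      (Gamma (1 + a * (n * m + l)) / Gamma (1 + a * (n * m + l) + a)) := by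
  rw [kilbasSaigoCoeff, prod_range_succ, ← kilbasSaigoCoeff,
    show 1 + a * (n * m + l + 1) = 1 + a * (n * m + l) + a by ring]

theorem kilbasSaigo_zero (a m l : ℝ) : kilbasSaigo a m l 0 = 1 := by
  rw [kilbasSaigo, tsum_eq_single 0 fun n hn => by simp [hn], kilbasSaigoCoeff_zero, pow_zero,
    mul_one]

variable {a m l : ℝ}

theorem one_add_mul_natCast_mul_add_pos (ham : 0 ≤ a * m) (hl : 0 < 1 + a * l) (n : ℕ) :
    0 < 1 + a * (n * m + l) := by
  have hn : 0 ≤ a * m * n := mul_nonneg ham n.cast_nonneg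
  linarith

theorem tendsto_kilbasSaigoCoeff_ratio (l : ℝ) (ha : 0 < a) (hm : 0 < m) :
    Tendsto (fun n : ℕ => Gamma (1 + a * (n * m + l)) / Gamma (1 + a * (n * m + l) + a))
      atTop (𝓝 0) :=
  (tendsto_Gamma_div_Gamma_add_atTop ha).comp <| tendsto_atTop_add_const_left _ _ <|
    (tendsto_atTop_add_const_right _ _
      (tendsto_natCast_atTop_atTop.atTop_mul_const hm)).const_mul_atTop ha

theorem summable_kilbasSaigo (l : ℝ) (ha : 0 < a) (hm : 0 < m) (z : ℝ) :
    Summable fun n => kilbasSaigoCoeff a m l n * z ^ n := by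
  have hlim := ((tendsto_kilbasSaigoCoeff_ratio l ha hm).mul_const z).norm
  rw [zero_mul, norm_zero] at hlim
  refine summable_of_ratio_norm_eventually_le (r := 1 / 2) (by norm_num) ?_
  filter_upwards [hlim.eventually_le_const one_half_pos] with n hn
  rw [kilbasSaigoCoeff_succ, pow_succ, mul_mul_mul_comm, norm_mul, mul_comm]
  exact mul_le_mul_of_nonneg_right hn (norm_nonneg _)

theorem continuous_kilbasSaigo (l : ℝ) (ha : 0 < a) (hm : 0 < m) :
    Continuous (kilbasSaigo a m l) := by
  refine continuous_iff_continuousAt.2 fun z => ?_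
  refine (continuousOn_tsum (s := Metric.closedBall 0 (|z| + 1)) (fun n => by fun_prop)
    (summable_kilbasSaigo l ha hm (|z| + 1)).norm fun n y hy => ?_).continuousAt
    (Metric.closedBall_mem_nhds_of_mem (by simp))
  rw [mem_closedBall_zero_iff] at hy
  rw [norm_mul, norm_mul, norm_pow, norm_pow]
  gcongr
  exact hy.trans (le_abs_self _)

theorem hasSum_kilbasSaigo_succ (l : ℝ) (ha : 0 < a) (hm : 0 < m) (z : ℝ) :
    HasSum (fun n => kilbasSaigoCoeff a m l (n + 1) * z ^ (n + 1)) (kilbasSaigo a m l z - 1) := by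
  have hsum := (hasSum_nat_add_iff' 1).2 (summable_kilbasSaigo l ha hm z).hasSum
  simpa [kilbasSaigoCoeff_zero, kilbasSaigo] using hsum

theorem integral_mul_kilbasSaigo (ha : 0 < a) (hm : 0 < m) (hl : 0 < 1 + a * l) (z : ℝ) :
    z * ∫ s in Set.Ioo (0 : ℝ) 1,
        s ^ (a * l) * (1 - s) ^ (a - 1) * kilbasSaigo a m l (s ^ (a * m) * z) =
      Gamma a * (kilbasSaigo a m l z - 1) := by
  rcases eq_or_ne z 0 with rfl | hz
  · simp [kilbasSaigo_zero]
  have hu (n : ℕ) := one_add_mul_natCast_mul_add_pos (by positivity : 0 ≤ a * m) hl n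
  have hterm : HasSum (fun n : ℕ => kilbasSaigoCoeff a m l n * z ^ n *
      ∫ s in Set.Ioo (0 : ℝ) 1, s ^ (1 + a * (n * m + l) - 1) * (1 - s) ^ (a - 1))
      (Gamma a * (kilbasSaigo a m l z - 1) / z) := by
    refine (((hasSum_kilbasSaigo_succ l ha hm z).mul_left (Gamma a)).div_const z).congr_fun
      fun n => ?_
    rw [integral_rpow_mul_one_sub_rpow (hu n) ha, kilbasSaigoCoeff_succ]
    field_simp
    ring
  have hsum := (hasSum_mul_integral_of_nonneg
    (fun n => (ae_restrict_mem measurableSet_Ioo).mono fun s hs =>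
      mul_nonneg (rpow_nonneg hs.1.le _) (rpow_nonneg (sub_nonneg.2 hs.2.le) _))
    (fun n => integrableOn_rpow_mul_one_sub_rpow (hu n) ha) hterm.summable).unique hterm
  have hcongr : Set.EqOn
      (fun s : ℝ => ∑' n : ℕ, kilbasSaigoCoeff a m l n * z ^ n *
        (s ^ (1 + a * (n * m + l) - 1) * (1 - s) ^ (a - 1)))
      (fun s => s ^ (a * l) * (1 - s) ^ (a - 1) * kilbasSaigo a m l (s ^ (a * m) * z))
      (Set.Ioo 0 1) := fun s hs => by
    simp only [kilbasSaigo]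
    rw [← tsum_mul_left]
    refine tsum_congr fun n => ?_
    rw [show 1 + a * (n * m + l) - 1 = a * l + a * m * n by ring, rpow_add hs.1,
      rpow_mul hs.1.le (a * m), rpow_natCast]
    ring
  rw [← setIntegral_congr_fun measurableSet_Ioo hcongr, hsum]
  field_simp

end KilbasSaigo

section NegativeAxis

variable {a m z : ℝ}

theorem hasSum_kilbasSaigo_mul_Gamma_ratio (ha0 : 0 < a) (ha1 : a < 1) (hm : 0 < m) (z : ℝ) :
    HasSum (fun n : ℕ => kilbasSaigoCoeff a m (m - 1) n * z ^ n *
      (Gamma (1 - a) * Gamma (1 + a * m * n) / Gamma (1 + a * m * n - a)))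
      (1 + Gamma (1 - a) * z * kilbasSaigo a m (m - 1) z) := by
  have hG : Gamma (1 - a) ≠ 0 := (Gamma_pos_of_pos (sub_pos.2 ha1)).ne'
  refine (hasSum_nat_add_iff' 1).1 ?_
  rw [sum_range_one, kilbasSaigoCoeff_zero, Nat.cast_zero, mul_zero, add_zero, Gamma_one,
    pow_zero, mul_one, mul_one, one_mul, div_self hG, add_sub_cancel_left]
  refine ((summable_kilbasSaigo (m - 1) ha0 hm z).hasSum.mul_left (Gamma (1 - a) * z)).congr_fun
    fun n => ?_
  have hpos : 0 < a * m * (n + 1) := by positivity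
  have hnum := (Gamma_pos_of_pos (show 0 < 1 + a * m * (n + 1) - a by linarith)).ne'
  have hden := (Gamma_pos_of_pos (show 0 < 1 + a * m * (n + 1) by linarith)).ne'
  rw [kilbasSaigoCoeff_succ, Nat.cast_succ,
    show 1 + a * (n * m + (m - 1)) + a = 1 + a * m * (n + 1) by ring,
    show 1 + a * (n * m + (m - 1)) = 1 + a * m * (n + 1) - a by ring]
  generalize 1 + a * m * ((n : ℝ) + 1) = t at hnum hden ⊢
  field_simp
  ring

theorem marchaudDeriv_kilbasSaigo (ha0 : 0 < a) (ha1 : a < 1) (hm : 0 < m) (z : ℝ) :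
    marchaudDeriv a (a * m) (kilbasSaigo a m (m - 1)) z =
      1 + Gamma (1 - a) * z * kilbasSaigo a m (m - 1) z :=
  marchaudDeriv_tsum ha0 ha1 (by positivity) (summable_kilbasSaigo (m - 1) ha0 hm z)
    (hasSum_kilbasSaigo_mul_Gamma_ratio ha0 ha1 hm z)

theorem marchaudDeriv_kilbasSaigo_mul_sub (ha0 : 0 < a) (ha1 : a < 1) (hm : 0 < m) (r z : ℝ) :
    marchaudDeriv a (a * m)
        (fun w => kilbasSaigo a m (m - 1) (r * w) - kilbasSaigo a m (m - 1) w) z =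
      Gamma (1 - a) * z *
        (r * kilbasSaigo a m (m - 1) (r * z) - kilbasSaigo a m (m - 1) z) := by
  have hsummable := summable_kilbasSaigo (m - 1) ha0 hm
  have hcoeff (w : ℝ) (n : ℕ) : kilbasSaigoCoeff a m (m - 1) n * (r ^ n - 1) * w ^ n =
      kilbasSaigoCoeff a m (m - 1) n * (r * w) ^ n - kilbasSaigoCoeff a m (m - 1) n * w ^ n := by
    ring
  have hseries : (fun w => kilbasSaigo a m (m - 1) (r * w) - kilbasSaigo a m (m - 1) w) =
      fun w => ∑' n, kilbasSaigoCoeff a m (m - 1) n * (r ^ n - 1) * w ^ n := by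
    ext w
    simp only [hcoeff, kilbasSaigo]
    exact ((hsummable (r * w)).tsum_sub (hsummable w)).symm
  rw [hseries]
  refine marchaudDeriv_tsum ha0 ha1 (by positivity) ?_ ?_
  · simpa only [hcoeff] using (hsummable (r * z)).sub (hsummable z)
  · simp only [hcoeff, sub_mul]
    convert! (hasSum_kilbasSaigo_mul_Gamma_ratio ha0 ha1 hm (r * z)).sub
      (hasSum_kilbasSaigo_mul_Gamma_ratio ha0 ha1 hm z) using 1
    ring

theorem kilbasSaigo_nonneg (ha0 : 0 < a) (ha1 : a < 1) (hm : 0 < m) (hz : z ≤ 0) :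
    0 ≤ kilbasSaigo a m (m - 1) z := by
  have hG : 0 < Gamma (1 - a) := Gamma_pos_of_pos (sub_pos.2 ha1)
  refine nonneg_of_marchaudDeriv_nonneg (b := a * m) ha0.le (by positivity) hz
    (continuous_kilbasSaigo (m - 1) ha0 hm).continuousOn fun w hw hneg => ?_
  rw [marchaudDeriv_kilbasSaigo ha0 ha1 hm]
  exact add_nonneg zero_le_one
    (mul_nonneg_of_nonpos_of_nonpos (mul_nonpos_of_nonneg_of_nonpos hG.le hw.2) hneg.le)

theorem kilbasSaigo_le_kilbasSaigo_mul {r : ℝ} (ha0 : 0 < a) (ha1 : a < 1) (hm : 0 < m)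
    (hz : z ≤ 0) (hr : r ∈ Set.Icc (0 : ℝ) 1) :
    kilbasSaigo a m (m - 1) z ≤ kilbasSaigo a m (m - 1) (r * z) := by
  have hG : 0 < Gamma (1 - a) := Gamma_pos_of_pos (sub_pos.2 ha1)
  have hcont := continuous_kilbasSaigo (m - 1) ha0 hm
  refine sub_nonneg.1 (nonneg_of_marchaudDeriv_nonneg (b := a * m)
    (f := fun w => kilbasSaigo a m (m - 1) (r * w) - kilbasSaigo a m (m - 1) w)
    ha0.le (by positivity) hz (by fun_prop) fun w hw hneg => ?_)
  have hnonneg := kilbasSaigo_nonneg ha0 ha1 hm (mul_mem_Icc_of_nonpos hw.2 hr).2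
  have hr_mul := mul_le_of_le_one_left hnonneg hr.2
  rw [marchaudDeriv_kilbasSaigo_mul_sub ha0 ha1 hm]
  exact mul_nonneg_of_nonpos_of_nonpos (mul_nonpos_of_nonneg_of_nonpos hG.le hw.2) (by linarith)

theorem kilbasSaigo_le_one (ha0 : 0 < a) (ha1 : a < 1) (hm : 0 < m) (hz : z ≤ 0) :
    kilbasSaigo a m (m - 1) z ≤ 1 := by
  simpa [kilbasSaigo_zero] using
    kilbasSaigo_le_kilbasSaigo_mul ha0 ha1 hm hz (r := 0) (by simp)

theorem one_le_one_sub_Gamma_mul_kilbasSaigo (ha0 : 0 < a) (ha1 : a < 1) (hm : 0 < m)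
    (hz : z ≤ 0) : 1 ≤ (1 - Gamma (1 - a) * z) * kilbasSaigo a m (m - 1) z := by
  have hle := marchaudDeriv_le_self (b := a * m) (f := kilbasSaigo a m (m - 1)) ha0.le fun s hs =>
    kilbasSaigo_le_kilbasSaigo_mul ha0 ha1 hm hz (rpow_mem_Icc (by positivity) hs)
  rw [marchaudDeriv_kilbasSaigo ha0 ha1 hm] at hle
  linarith

theorem integrableOn_mul_kilbasSaigo (ha0 : 0 < a) (ha1 : a < 1) (hm : 0 < m) (hz : z ≤ 0)
    {κ : ℝ → ℝ} (hκ : IntegrableOn κ (Set.Ioo 0 1)) :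
    IntegrableOn (fun s => κ s * kilbasSaigo a m (m - 1) (s ^ (a * m) * z)) (Set.Ioo 0 1) := by
  have hmeas := (continuous_kilbasSaigo (m - 1) ha0 hm).measurable
  refine hκ.mul_bdd (c := 1) (by fun_prop : Measurable _).aestronglyMeasurable ?_
  filter_upwards [ae_restrict_mem measurableSet_Ioo] with s hs
  have hsz : s ^ (a * m) * z ≤ 0 := mul_nonpos_of_nonneg_of_nonpos (rpow_nonneg hs.1.le _) hz
  rw [Real.norm_of_nonneg (kilbasSaigo_nonneg ha0 ha1 hm hsz)]
  exact kilbasSaigo_le_one ha0 ha1 hm hsz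

theorem one_sub_Gamma_ratio_mul_kilbasSaigo_le_one (ha0 : 0 < a) (ha1 : a < 1) (hm : 0 < m)
    (hz : z ≤ 0) : (1 - Gamma (1 + a * (m - 1)) / Gamma (1 + a * m) * z) *
      kilbasSaigo a m (m - 1) z ≤ 1 := by
  have ham : 0 < a * m := mul_pos ha0 hm
  have hu : 0 < 1 + a * (m - 1) := by linarith
  have hkernel := integrableOn_rpow_mul_one_sub_rpow hu ha0
  have hbeta := integral_rpow_mul_one_sub_rpow hu ha0
  rw [add_sub_cancel_left] at hkernel hbeta
  rw [show 1 + a * (m - 1) + a = 1 + a * m by ring] at hbeta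
  have hmono := setIntegral_mono_on (hkernel.mul_const (kilbasSaigo a m (m - 1) z))
    (integrableOn_mul_kilbasSaigo ha0 ha1 hm hz hkernel) measurableSet_Ioo
    fun s hs => mul_le_mul_of_nonneg_left
      (kilbasSaigo_le_kilbasSaigo_mul ha0 ha1 hm hz (rpow_mem_Icc ham.le hs))
      (mul_nonneg (rpow_nonneg hs.1.le _) (rpow_nonneg (sub_nonneg.2 hs.2.le) _))
  rw [integral_mul_const, hbeta] at hmono
  have hvolterra := integral_mul_kilbasSaigo ha0 hm hu z
  refine le_of_mul_le_mul_left ?_ (Gamma_pos_of_pos ha0)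
  calc Gamma a * ((1 - Gamma (1 + a * (m - 1)) / Gamma (1 + a * m) * z) *
        kilbasSaigo a m (m - 1) z)
      = Gamma a * kilbasSaigo a m (m - 1) z - z * (Gamma (1 + a * (m - 1)) * Gamma a /
          Gamma (1 + a * m) * kilbasSaigo a m (m - 1) z) := by ring
    _ ≤ Gamma a * 1 := by linarith [mul_le_mul_of_nonpos_left hmono hz]

end NegativeAxis

/-- Two-sided bound for the Kilbas–Saigo function `E_{a,m,m-1}(-x)` for `x ≥ 0`,
`0 < a < 1`, `m > 0`; in particular `0 < E_{a,m,m-1}(-x) ≤ 1`. -/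
theorem kilbasSaigo_bounds (a m : ℝ) (ha0 : 0 < a) (ha1 : a < 1) (hm : 0 < m)
    (x : ℝ) (hx : 0 ≤ x) :
    let E : ℝ := ∑' n : ℕ, (∏ k ∈ Finset.range n,
      Real.Gamma (1 + a * (k * m + (m - 1))) /
        Real.Gamma (1 + a * (k * m + (m - 1) + 1))) * (-x) ^ n
    1 / (1 + Real.Gamma (1 - a) * x) ≤ E ∧
      E ≤ 1 / (1 + (Real.Gamma (1 + a * (m - 1)) / Real.Gamma (1 + a * m)) * x) ∧
      0 < E ∧ E ≤ 1 := by
  intro E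
  rw [show E = kilbasSaigo a m (m - 1) (-x) from rfl]
  have ham : 0 < a * m := mul_pos ha0 hm
  have hG : 0 < Gamma (1 - a) := Gamma_pos_of_pos (by linarith)
  have hratio : 0 < Gamma (1 + a * (m - 1)) / Gamma (1 + a * m) :=
    div_pos (Gamma_pos_of_pos (by linarith)) (Gamma_pos_of_pos (by linarith))
  have hdenlower : 0 < 1 + Gamma (1 - a) * x := by linarith [mul_nonneg hG.le hx]
  have hdenupper : 0 < 1 + Gamma (1 + a * (m - 1)) / Gamma (1 + a * m) * x := by
    linarith [mul_nonneg hratio.le hx]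
  have hneg : -x ≤ 0 := neg_nonpos.2 hx
  have hlower := one_le_one_sub_Gamma_mul_kilbasSaigo ha0 ha1 hm hneg
  have hupper := one_sub_Gamma_ratio_mul_kilbasSaigo_le_one ha0 ha1 hm hneg
  rw [mul_neg, sub_neg_eq_add] at hlower hupper
  exact ⟨(div_le_iff₀' hdenlower).2 hlower, (le_div_iff₀' hdenupper).2 hupper,
    pos_of_mul_pos_right (one_pos.trans_le hlower) hdenlower.le, kilbasSaigo_le_one ha0 ha1 hm hneg⟩
end

section
/- For a ∈ (0,1), m > 0, and l > m − 1/a, the Kilbas–Saigo function satisfies the asymptotic relation E_{a,m,l}(−x) ~ Γ(1+a(l+1−m)) / (Γ(1+a(l−m))·x) as x → ∞ along the positive real axis; that is, lim_{x→∞} x · E_{a,m,l}(−x) = Γ(1+a(l+1−m))/Γ(1+a(l−m)). -/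
open Real Finset Filter

/-!
Write `F β` for the series with coefficients `∏ k < n, Γ(β + kδ) / Γ(β + kδ + a)`. Peeling off the
constant term gives `F β x = 1 - x * Γ(β) / Γ(β + a) * F (β + δ) x`, so the asymptotics of
`F (β + δ)` follow once `F β x → 0`.

If `δ ≤ β`, truncating Euler products for the Gamma quotients exhibits `F β` as a limit of averages
of `x ↦ exp (-c * x * U)` with `U` a product of beta variables, so it is nonnegative, decreasing
and convex on `[0, ∞)`. Moreover `F (β + δ) x` is an average of `F β (x * u)` with `u ≤ 1`, so
`F β x ≤ F (β + δ) x`, and the recursion forces `F β x = O(1 / x)`.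

For `β < δ` positivity may fail, but `F β = G + (δ / β) * x * G'` where `G` is an average of
`F (β + δ)`. Since `G` is convex and tends to `0`, so does `x * G'`.
-/

namespace KilbasSaigo

open MeasureTheory ProbabilityTheory Topology

section AltSeries

/-- The value at `-x` of the power series with coefficients `d`. -/
noncomputable def altSeries (d : ℕ → ℝ) (x : ℝ) : ℝ := ∑' n, d n * (-x) ^ n

/-- The power series with coefficients `d` converges on all of `ℝ`. -/
def IsEntire (d : ℕ → ℝ) : Prop := ∀ x : ℝ, Summable fun n => d n * x ^ n

variable {d e : ℕ → ℝ}

lemma IsEntire.of_abs_le (he : IsEntire e) (h : ∀ n, |d n| ≤ |e n|) : IsEntire d := by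
  refine fun x => .of_norm_bounded (he x).abs fun n => ?_
  rw [norm_eq_abs, abs_mul, abs_mul]
  exact mul_le_mul_of_nonneg_right (h n) (abs_nonneg _)

lemma IsEntire.natCast_mul (hd : IsEntire d) : IsEntire fun n => n * d n := by
  refine fun x => .of_norm_bounded (hd (2 * x)).abs fun n => ?_
  have hn : (n : ℝ) ≤ 2 ^ n := by exact_mod_cast Nat.lt_two_pow_self.le
  calc ‖n * d n * x ^ n‖ = n * |d n * x ^ n| := by
        rw [mul_assoc, norm_mul, norm_natCast, norm_eq_abs]
    _ ≤ 2 ^ n * |d n * x ^ n| := by gcongr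
    _ = |d n * (2 * x) ^ n| := by
        rw [mul_pow, mul_left_comm, abs_mul (2 ^ n), abs_of_pos (a := (2 : ℝ) ^ n) (by positivity)]

lemma isEntire_prod {b : ℕ → ℝ} (hb : Tendsto b atTop (𝓝 0)) :
    IsEntire fun n => ∏ k ∈ range n, b k := by
  intro x
  have hbx : Tendsto (fun k => ‖b k * x‖) atTop (𝓝 0) := by
    simpa only [zero_mul, norm_zero] using (hb.mul_const x).norm
  refine summable_of_ratio_norm_eventually_le (r := 1 / 2) (by norm_num) ?_
  filter_upwards [hbx.eventually_le_const (by norm_num : (0 : ℝ) < 1 / 2)] with n hn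
  rw [prod_range_succ, pow_succ, mul_mul_mul_comm, norm_mul, mul_comm]
  gcongr

lemma altSeries_const_mul (c x : ℝ) : altSeries (fun n => c * d n) x = c * altSeries d x := by
  simp only [altSeries, mul_assoc, tsum_mul_left]

lemma IsEntire.altSeries_eq_sub (hd : IsEntire d) (x : ℝ) :
    altSeries d x = d 0 - x * altSeries (fun n => d (n + 1)) x := by
  rw [altSeries, (hd (-x)).tsum_eq_zero_add, altSeries, ← tsum_mul_left, sub_eq_add_neg, ← tsum_neg]
  congr 1
  · ring
  · exact tsum_congr fun n => by ring

lemma IsEntire.hasDerivAt_altSeries (hd : IsEntire d) (x : ℝ) :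
    HasDerivAt (altSeries d) (∑' n, d n * (n * (-x) ^ (n - 1) * -1)) x := by
  have hx : x ∈ Metric.ball (0 : ℝ) (|x| + 1) := by simp
  refine hasDerivAt_tsum_of_isPreconnected (hd.natCast_mul (|x| + 1)).abs Metric.isOpen_ball
    (convex_ball _ _).isPreconnected (fun n y _ => ((hasDerivAt_neg y).pow n).const_mul (d n))
    (fun n y hy => ?_) hx (hd (-x)) hx
  have hy' : |y| ≤ |x| + 1 := by simpa using (Metric.mem_ball.1 hy).le
  calc ‖d n * (n * (-y) ^ (n - 1) * -1)‖ = n * |d n| * |y| ^ (n - 1) := by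
        simp only [norm_mul, norm_pow, norm_neg, norm_one, norm_eq_abs, Nat.abs_cast]; ring
    _ ≤ n * |d n| * (|x| + 1) ^ (n - 1) := by gcongr
    _ ≤ n * |d n| * (|x| + 1) ^ n := by
        gcongr
        · linarith [abs_nonneg x]
        · exact n.sub_le 1
    _ = |n * d n * (|x| + 1) ^ n| := by
        rw [abs_mul, abs_mul, Nat.abs_cast, abs_of_nonneg (a := (|x| + 1) ^ n) (by positivity)]

lemma IsEntire.continuous_altSeries (hd : IsEntire d) : Continuous (altSeries d) :=
  continuous_iff_continuousAt.2 fun x => (hd.hasDerivAt_altSeries x).continuousAt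

lemma IsEntire.mul_deriv_altSeries (hd : IsEntire d) (x : ℝ) :
    x * deriv (altSeries d) x = altSeries (fun n => n * d n) x := by
  rw [(hd.hasDerivAt_altSeries x).deriv, ← tsum_mul_left]
  refine tsum_congr fun n => ?_
  rcases n with _ | n
  · simp
  · rw [Nat.add_sub_cancel]; ring

lemma IsEntire.altSeries_one_add_mul (hd : IsEntire d) (c x : ℝ) :
    altSeries (fun n => (1 + n * c) * d n) x
      = altSeries d x + c * (x * deriv (altSeries d) x) := by
  rw [hd.mul_deriv_altSeries, ← altSeries_const_mul, altSeries, altSeries, altSeries,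
    ← (hd _).tsum_add (by simpa only [mul_assoc] using (hd.natCast_mul _).mul_left c)]
  exact tsum_congr fun n => by ring

lemma tendsto_altSeries_of_abs_le {D : ℕ → ℕ → ℝ} (he : IsEntire e) (hDe : ∀ N n, |D N n| ≤ e n)
    (hD : ∀ n, Tendsto (fun N => D N n) atTop (𝓝 (d n))) (x : ℝ) :
    Tendsto (fun N => altSeries (D N) x) atTop (𝓝 (altSeries d x)) := by
  refine tendsto_tsum_of_dominated_convergence (he |x|) (fun n => (hD n).mul_const _)
    (.of_forall fun N n => ?_)
  rw [norm_mul, norm_pow, norm_neg, norm_eq_abs, norm_eq_abs]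
  gcongr
  exact hDe N n

end AltSeries

section Moments

/-- Moment sequences of random variables with values in `(0, 1]`. The value `0` is excluded so that
`x * u → ∞` as `x → ∞`. -/
def IsMomentSeq (M : ℕ → ℝ) : Prop :=
  ∃ μ : Measure ℝ, IsProbabilityMeasure μ ∧ (∀ᵐ u ∂μ, u ∈ Set.Ioc 0 1) ∧ ∀ n, ∫ u, u ^ n ∂μ = M n

lemma isMomentSeq_one : IsMomentSeq fun _ => 1 :=
  ⟨.dirac 1, inferInstance, by simp, by simp⟩

lemma measurable_betaPDF (p r : ℝ) : Measurable (betaPDF p r) :=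
  (measurable_betaPDFReal p r).ennreal_ofReal

lemma ae_mem_Ioo_betaMeasure (p r : ℝ) : ∀ᵐ u ∂betaMeasure p r, u ∈ Set.Ioo 0 1 := by
  rw [betaMeasure, ae_withDensity_iff (measurable_betaPDF p r)]
  refine .of_forall fun u hu => ⟨?_, ?_⟩
  · exact not_le.1 fun h => hu (betaPDF_eq_zero_of_nonpos h)
  · exact not_le.1 fun h => hu (betaPDF_eq_zero_of_one_le h)

lemma betaPDFReal_nonneg {p r : ℝ} (hp : 0 < p) (hr : 0 < r) (u : ℝ) : 0 ≤ betaPDFReal p r u := by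
  by_cases hu : 0 < u ∧ u < 1
  · exact (betaPDFReal_pos hu.1 hu.2 hp hr).le
  · rw [betaPDFReal, if_neg hu]

lemma integral_betaPDFReal {p r : ℝ} (hp : 0 < p) (hr : 0 < r) : ∫ u, betaPDFReal p r u = 1 := by
  rw [integral_eq_lintegral_of_nonneg_ae (.of_forall (betaPDFReal_nonneg hp hr))
    (stronglyMeasurable_betaPDFReal p r).aestronglyMeasurable]
  exact (ENNReal.toReal_eq_one_iff _).2 (lintegral_betaPDF_eq_one hp hr)

lemma integral_rpow_betaMeasure {p r t : ℝ} (hp : 0 < p) (hr : 0 < r) (hpt : 0 < p + t) :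
    ∫ u, u ^ t ∂betaMeasure p r = beta (p + t) r / beta p r := by
  have hpdf (u : ℝ) :
      betaPDFReal p r u * u ^ t = beta (p + t) r / beta p r * betaPDFReal (p + t) r u := by
    simp only [betaPDFReal]
    split_ifs with hu
    · have := (beta_pos hpt hr).ne'
      rw [show p + t - 1 = (p - 1) + t by ring, rpow_add hu.1]
      field_simp
    · simp only [zero_mul, mul_zero]
  calc ∫ u, u ^ t ∂betaMeasure p r = ∫ u, betaPDFReal p r u * u ^ t := by
        rw [betaMeasure, integral_withDensity_eq_integral_toReal_smul (measurable_betaPDF p r)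
          (.of_forall fun _ => ENNReal.ofReal_lt_top)]
        simp only [betaPDF, ENNReal.toReal_ofReal (betaPDFReal_nonneg hp hr _), smul_eq_mul]
    _ = beta (p + t) r / beta p r := by
        simp only [hpdf]
        rw [integral_const_mul, integral_betaPDFReal hpt hr, mul_one]

lemma isMomentSeq_Gamma_div_Gamma {p q δ : ℝ} (hp : 0 < p) (hpq : p ≤ q) (hδ : 0 ≤ δ) :
    IsMomentSeq fun n => Gamma (p + n * δ) / Gamma (q + n * δ) * (Gamma q / Gamma p) := by
  have hG {s : ℝ} (hs : 0 < s) : Gamma s ≠ 0 := (Gamma_pos_of_pos hs).ne'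
  have hq : 0 < q := hp.trans_le hpq
  rcases hpq.eq_or_lt with rfl | hpq
  · convert isMomentSeq_one with n
    rw [div_self (hG (by positivity)), div_self (hG hp), mul_one]
  have hr : 0 < q - p := sub_pos.2 hpq
  have := isProbabilityMeasureBeta hp hr
  have hmeas : Measurable fun u : ℝ => u ^ δ := by fun_prop
  refine ⟨(betaMeasure p (q - p)).map (· ^ δ), Measure.isProbabilityMeasure_map hmeas.aemeasurable,
    ?_, fun n => ?_⟩
  · refine (ae_map_iff hmeas.aemeasurable measurableSet_Ioc).2 ?_
    filter_upwards [ae_mem_Ioo_betaMeasure p (q - p)] with u hu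
    exact ⟨rpow_pos_of_pos hu.1 δ, rpow_le_one hu.1.le hu.2.le hδ⟩
  · have hpow : ∀ᵐ u ∂betaMeasure p (q - p), (u ^ δ) ^ n = u ^ (n * δ) := by
      filter_upwards [ae_mem_Ioo_betaMeasure p (q - p)] with u hu
      rw [← rpow_mul_natCast hu.1.le, mul_comm]
    rw [integral_map hmeas.aemeasurable (by fun_prop), integral_congr_ae hpow,
      integral_rpow_betaMeasure hp hr (by positivity), beta, beta,
      show p + n * δ + (q - p) = q + n * δ by ring, show p + (q - p) = q by ring]
    have := hG hp
    have := hG hr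
    field_simp

lemma prod_range_add_eq_Gamma_div {p : ℝ} (hp : 0 < p) (n : ℕ) :
    ∏ k ∈ range n, (p + k) = Gamma (p + n) / Gamma p := by
  induction n with
  | zero => simp [(Gamma_pos_of_pos hp).ne']
  | succ n ih =>
    rw [prod_range_succ, ih, Nat.cast_succ, ← add_assoc, Gamma_add_one (by positivity)]
    ring

lemma isMomentSeq_prod {p q : ℝ} (hp : 0 < p) (hpq : p ≤ q) :
    IsMomentSeq fun n => ∏ k ∈ range n, ((p + k) / (q + k)) := by
  convert isMomentSeq_Gamma_div_Gamma hp hpq zero_le_one with n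
  rw [prod_div_distrib, prod_range_add_eq_Gamma_div hp,
    prod_range_add_eq_Gamma_div (hp.trans_le hpq), mul_one, div_div_div_eq, div_mul_div_comm,
    mul_comm (Gamma p)]

end Moments

section Averages

variable {d : ℕ → ℝ} {μ : Measure ℝ} [IsProbabilityMeasure μ]

lemma abs_integral_pow_le_one (hμ : ∀ᵐ u ∂μ, u ∈ Set.Ioc 0 1) (n : ℕ) : |∫ u, u ^ n ∂μ| ≤ 1 := by
  have hpow : ∀ᵐ u ∂μ, ‖u ^ n‖ ≤ 1 := by
    filter_upwards [hμ] with u hu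
    rw [norm_of_nonneg (pow_nonneg hu.1.le n)]
    exact pow_le_one₀ hu.1.le hu.2
  simpa using norm_integral_le_of_norm_le_const hpow

lemma IsEntire.mul_integral_pow (hd : IsEntire d) (hμ : ∀ᵐ u ∂μ, u ∈ Set.Ioc 0 1) :
    IsEntire fun n => d n * ∫ u, u ^ n ∂μ :=
  hd.of_abs_le fun n => by
    rw [abs_mul]
    exact mul_le_of_le_one_right (abs_nonneg _) (abs_integral_pow_le_one hμ n)

lemma IsEntire.integrable_altSeries_mul (hd : IsEntire d) (hμ : ∀ᵐ u ∂μ, u ∈ Set.Ioc 0 1) (x : ℝ) :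
    Integrable (fun u => altSeries d (x * u)) μ := by
  have hcont : Continuous fun u => altSeries d (x * u) := hd.continuous_altSeries.comp (by fun_prop)
  obtain ⟨C, hC⟩ := (isCompact_Icc (a := (0 : ℝ)) (b := 1)).exists_bound_of_continuousOn
    hcont.continuousOn
  refine .of_bound hcont.aestronglyMeasurable C ?_
  filter_upwards [hμ] with u hu using hC u (Set.Ioc_subset_Icc_self hu)

lemma IsEntire.altSeries_mul_integral_pow (hd : IsEntire d) (hμ : ∀ᵐ u ∂μ, u ∈ Set.Ioc 0 1)
    (x : ℝ) : altSeries (fun n => d n * ∫ u, u ^ n ∂μ) x = ∫ u, altSeries d (x * u) ∂μ := by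
  have hterm (n : ℕ) : ∫ u, d n * (-(x * u)) ^ n ∂μ = d n * (∫ u, u ^ n ∂μ) * (-x) ^ n := by
    simp only [← neg_mul, mul_pow]
    rw [integral_const_mul, integral_const_mul]
    ring
  have hsum : HasSum (fun n => ∫ u, d n * (-(x * u)) ^ n ∂μ) (∫ u, altSeries d (x * u) ∂μ) := by
    refine hasSum_integral_of_dominated_convergence (fun n _ => |d n * x ^ n|)
      (fun n => by fun_prop) (fun n => ?_) (.of_forall fun _ => (hd x).abs) (integrable_const _)
      (.of_forall fun u => (hd _).hasSum)
    filter_upwards [hμ] with u hu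
    rw [norm_eq_abs, abs_mul, abs_mul, abs_pow, abs_pow, abs_neg, abs_mul, abs_of_pos hu.1]
    have hxu : |x| * u ≤ |x| := mul_le_of_le_one_right (abs_nonneg x) hu.2
    have hxu0 : 0 ≤ |x| * u := mul_nonneg (abs_nonneg x) hu.1.le
    gcongr
  rw [← hsum.tsum_eq]
  exact tsum_congr fun n => (hterm n).symm

end Averages

section ConvexDecay

/-- Coefficient sequences whose alternating power series is nonnegative, decreasing and convex on
`[0, ∞)`: the part of complete monotonicity that the asymptotic analysis consumes. -/
structure ConvexDecay (d : ℕ → ℝ) : Prop where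
  isEntire : IsEntire d
  nonneg : ∀ x, 0 ≤ x → 0 ≤ altSeries d x
  antitoneOn : AntitoneOn (altSeries d) (Set.Ici 0)
  convexOn : ConvexOn ℝ (Set.Ici 0) (altSeries d)

variable {d M : ℕ → ℝ}

lemma altSeries_pow_div_factorial (c x : ℝ) :
    altSeries (fun n => c ^ n / n.factorial) x = exp (c * -x) := by
  rw [exp_eq_exp_ℝ, NormedSpace.exp_eq_tsum_div]
  exact tsum_congr fun n => by rw [mul_pow]; ring

lemma convexDecay_pow_div_factorial {c : ℝ} (hc : 0 ≤ c) :
    ConvexDecay fun n => c ^ n / n.factorial where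
  isEntire x := (summable_pow_div_factorial (c * x)).congr fun n => by rw [mul_pow]; ring
  nonneg x _ := by rw [altSeries_pow_div_factorial]; positivity
  antitoneOn x _ y _ hxy := by
    rw [altSeries_pow_div_factorial, altSeries_pow_div_factorial]
    gcongr
  convexOn := by
    have hlin (x : ℝ) :
        altSeries (fun n => c ^ n / n.factorial) x = exp (LinearMap.mulLeft ℝ (-c) x) := by
      rw [altSeries_pow_div_factorial, LinearMap.mulLeft_apply, mul_neg, neg_mul]
    exact ((convexOn_exp.comp_linearMap (LinearMap.mulLeft ℝ (-c))).subset
      (Set.subset_univ _) (convex_Ici 0)).congr fun x _ => (hlin x).symm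

lemma ConvexDecay.of_tendsto {D : ℕ → ℕ → ℝ} (hDec : ∀ N, ConvexDecay (D N)) (hd : IsEntire d)
    (hDd : ∀ N n, |D N n| ≤ d n) (hD : ∀ n, Tendsto (fun N => D N n) atTop (𝓝 (d n))) :
    ConvexDecay d := by
  have hlim := tendsto_altSeries_of_abs_le hd hDd hD
  refine ⟨hd, fun x hx => ge_of_tendsto' (hlim x) fun N => (hDec N).nonneg x hx,
    fun x hx y hy hxy => le_of_tendsto_of_tendsto' (hlim y) (hlim x) fun N =>
      (hDec N).antitoneOn hx hy hxy,
    convex_Ici 0, fun x hx y hy s t hs ht hst => ?_⟩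
  exact le_of_tendsto_of_tendsto' (hlim _) (((hlim x).const_smul s).add ((hlim y).const_smul t))
    fun N => (hDec N).convexOn.2 hx hy hs ht hst

lemma ConvexDecay.mul_isMomentSeq (hd : ConvexDecay d) (hM : IsMomentSeq M) :
    ConvexDecay fun n => d n * M n := by
  obtain ⟨μ, _, hμ, hμM⟩ := hM
  simp only [← hμM]
  have hav := hd.isEntire.altSeries_mul_integral_pow hμ
  have hint := hd.isEntire.integrable_altSeries_mul hμ
  refine ⟨hd.isEntire.mul_integral_pow hμ, fun x hx => ?_, fun x hx y hy hxy => ?_,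
    convex_Ici 0, fun x hx y hy s t hs ht hst => ?_⟩
  · rw [hav]
    refine integral_nonneg_of_ae ?_
    filter_upwards [hμ] with u hu using hd.nonneg _ (mul_nonneg hx hu.1.le)
  · rw [hav, hav]
    refine integral_mono_ae (hint y) (hint x) ?_
    filter_upwards [hμ] with u hu
    exact hd.antitoneOn (mul_nonneg hx hu.1.le) (mul_nonneg hy hu.1.le)
      (mul_le_mul_of_nonneg_right hxy hu.1.le)
  · have hs_int : Integrable (fun u => s • altSeries d (x * u)) μ := (hint x).smul s
    have ht_int : Integrable (fun u => t • altSeries d (y * u)) μ := (hint y).smul t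
    rw [hav, hav, hav, ← integral_smul, ← integral_smul, ← integral_add hs_int ht_int]
    refine integral_mono_ae (hint _) (hs_int.add ht_int) ?_
    filter_upwards [hμ] with u hu
    rw [add_mul, smul_mul_assoc, smul_mul_assoc]
    exact hd.convexOn.2 (mul_nonneg hx hu.1.le) (mul_nonneg hy hu.1.le) hs ht hst

lemma ConvexDecay.mul_prod_isMomentSeq {M : ℕ → ℕ → ℝ} (hd : ConvexDecay d)
    (hM : ∀ j, IsMomentSeq (M j)) (N : ℕ) : ConvexDecay fun n => d n * ∏ j ∈ range N, M j n := by
  induction N with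
  | zero => simpa only [range_zero, prod_empty, mul_one] using hd
  | succ N ih => simpa only [prod_range_succ, mul_assoc] using ih.mul_isMomentSeq (hM N)

lemma ConvexDecay.le_altSeries_mul (hd : ConvexDecay d) (hM : IsMomentSeq M) {x : ℝ} (hx : 0 ≤ x) :
    altSeries d x ≤ altSeries (fun n => d n * M n) x := by
  obtain ⟨μ, _, hμ, hμM⟩ := hM
  simp only [← hμM]
  rw [hd.isEntire.altSeries_mul_integral_pow hμ]
  calc altSeries d x = ∫ _, altSeries d x ∂μ := by simp
    _ ≤ ∫ u, altSeries d (x * u) ∂μ := by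
        refine integral_mono_ae (integrable_const _) (hd.isEntire.integrable_altSeries_mul hμ x) ?_
        filter_upwards [hμ] with u hu
        exact hd.antitoneOn (mul_nonneg hx hu.1.le) hx (mul_le_of_le_one_right hx hu.2)

lemma ConvexDecay.tendsto_altSeries_mul (hd : ConvexDecay d) (hM : IsMomentSeq M)
    (hlim : Tendsto (altSeries d) atTop (𝓝 0)) :
    Tendsto (altSeries fun n => d n * M n) atTop (𝓝 0) := by
  obtain ⟨μ, _, hμ, hμM⟩ := hM
  simp only [← hμM]
  rw [funext (hd.isEntire.altSeries_mul_integral_pow hμ), ← integral_zero ℝ ℝ (μ := μ)]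
  refine tendsto_integral_filter_of_dominated_convergence (fun _ => altSeries d 0)
    (.of_forall fun x => (hd.isEntire.integrable_altSeries_mul hμ x).1) ?_ (integrable_const _) ?_
  · filter_upwards [eventually_ge_atTop 0] with x hx
    filter_upwards [hμ] with u hu
    have hxu : 0 ≤ x * u := mul_nonneg hx hu.1.le
    rw [norm_of_nonneg (hd.nonneg _ hxu)]
    exact hd.antitoneOn Set.self_mem_Ici hxu hxu
  · filter_upwards [hμ] with u hu using hlim.comp (tendsto_id.atTop_mul_const hu.1)

end ConvexDecay

lemma tendsto_mul_deriv_of_convexOn {f : ℝ → ℝ} {L : ℝ} (hf : ConvexOn ℝ (Set.Ici 0) f)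
    (hdiff : ∀ x, 0 < x → DifferentiableAt ℝ f x) (hlim : Tendsto f atTop (𝓝 L)) :
    Tendsto (fun x => x * deriv f x) atTop (𝓝 0) := by
  have hscale {c : ℝ} (hc : 0 < c) : Tendsto (fun x => f (x * c)) atTop (𝓝 L) :=
    hlim.comp (tendsto_id.atTop_mul_const hc)
  have hlower : Tendsto (fun x => 2 * (f x - f (x * (1 / 2)))) atTop (𝓝 0) := by
    simpa using (hlim.sub (hscale one_half_pos)).const_mul 2
  have hupper : Tendsto (fun x => f (x * 2) - f x) atTop (𝓝 0) := by
    simpa using (hscale two_pos).sub hlim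
  refine tendsto_of_tendsto_of_tendsto_of_le_of_le' hlower hupper ?_ ?_
  all_goals filter_upwards [eventually_gt_atTop 0] with x hx
  · have hslope := hf.slope_le_deriv (x := x * (1 / 2)) (y := x)
      (mul_nonneg hx.le one_half_pos.le) hx.le (by linarith) (hdiff x hx)
    rw [slope_def_field, div_le_iff₀ (by linarith)] at hslope
    linarith
  · have hslope := hf.deriv_le_slope (x := x) (y := x * 2) hx.le (mul_nonneg hx.le two_pos.le)
      (by linarith) (hdiff x hx)
    rw [slope_def_field, le_div_iff₀ (by linarith)] at hslope
    linarith

section GammaRatio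

-- Wendel's inequality, from the log-convexity of `Gamma` between `x` and `x + 1`.
lemma Gamma_add_le {x t : ℝ} (hx : 0 < x) (ht0 : 0 ≤ t) (ht1 : t ≤ 1) :
    Gamma (x + t) ≤ Gamma x * x ^ t := by
  rcases ht0.eq_or_lt with rfl | ht0
  · simp
  rcases ht1.eq_or_lt with rfl | ht1
  · rw [Gamma_add_one hx.ne', rpow_one, mul_comm]
  have hΓ : 0 < Gamma x := Gamma_pos_of_pos hx
  calc Gamma (x + t) = Gamma ((1 - t) * x + t * (x + 1)) := by ring_nf
    _ ≤ Gamma x ^ (1 - t) * Gamma (x + 1) ^ t :=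
        Gamma_mul_add_mul_le_rpow_Gamma_mul_rpow_Gamma hx (by linarith) (by linarith) ht0
          (by ring)
    _ = Gamma x ^ (1 - t) * Gamma x ^ t * x ^ t := by
        rw [Gamma_add_one hx.ne', mul_rpow hx.le hΓ.le]; ring
    _ = Gamma x * x ^ t := by rw [← rpow_add hΓ, sub_add_cancel, rpow_one]

variable {a : ℝ}

lemma rpow_mul_Gamma_div_Gamma_le_one (ha0 : 0 ≤ a) (ha1 : a ≤ 1) {x : ℝ} (hx : 0 < x) :
    x ^ (1 - a) * (Gamma (x + a) / Gamma (x + 1)) ≤ 1 := by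
  rw [← mul_div_assoc, div_le_one (Gamma_pos_of_pos (by linarith))]
  calc x ^ (1 - a) * Gamma (x + a) ≤ x ^ (1 - a) * (Gamma x * x ^ a) := by
        gcongr; exact Gamma_add_le hx ha0 ha1
    _ = x ^ (1 - a) * x ^ a * Gamma x := by ring
    _ = Gamma (x + 1) := by rw [← rpow_add hx, sub_add_cancel, rpow_one, Gamma_add_one hx.ne']

lemma le_rpow_mul_Gamma_div_Gamma (ha0 : 0 ≤ a) (ha1 : a ≤ 1) {x : ℝ} (hx : 0 < x) :
    (x / (x + a)) ^ (1 - a) ≤ x ^ (1 - a) * (Gamma (x + a) / Gamma (x + 1)) := by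
  have hxa : 0 < x + a := by linarith
  have hΓ : Gamma (x + 1) ≤ Gamma (x + a) * (x + a) ^ (1 - a) := by
    simpa only [add_add_sub_cancel] using
      Gamma_add_le hxa (sub_nonneg.2 ha1) (sub_le_self 1 ha0)
  rw [div_rpow hx.le hxa.le, div_eq_mul_one_div]
  refine mul_le_mul_of_nonneg_left ?_ (by positivity)
  rwa [div_le_div_iff₀ (by positivity) (by positivity), one_mul]

lemma tendsto_rpow_mul_Gamma_div_Gamma (ha0 : 0 ≤ a) (ha1 : a ≤ 1) :
    Tendsto (fun x => x ^ (1 - a) * (Gamma (x + a) / Gamma (x + 1))) atTop (𝓝 1) := by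
  have hratio : Tendsto (fun x : ℝ => x / (x + a)) atTop (𝓝 1) := by
    have h : Tendsto (fun x : ℝ => 1 - a / (x + a)) atTop (𝓝 (1 - 0)) :=
      tendsto_const_nhds.sub ((tendsto_atTop_add_const_right _ a tendsto_id).const_div_atTop a)
    rw [sub_zero] at h
    refine h.congr' ?_
    filter_upwards [eventually_gt_atTop 0] with x hx
    have : x + a ≠ 0 := by positivity
    field_simp
    ring
  have hlower := hratio.rpow_const (p := 1 - a) (.inl one_ne_zero)
  rw [one_rpow] at hlower
  refine tendsto_of_tendsto_of_tendsto_of_le_of_le' hlower tendsto_const_nhds ?_ ?_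
  all_goals filter_upwards [eventually_gt_atTop 0] with x hx
  · exact le_rpow_mul_Gamma_div_Gamma ha0 ha1 hx
  · exact rpow_mul_Gamma_div_Gamma_le_one ha0 ha1 hx

lemma tendsto_Gamma_div_Gamma_add (ha0 : 0 < a) (ha1 : a ≤ 1) :
    Tendsto (fun x => Gamma x / Gamma (x + a)) atTop (𝓝 0) := by
  have h := (tendsto_rpow_neg_atTop ha0).div (tendsto_rpow_mul_Gamma_div_Gamma ha0.le ha1)
    one_ne_zero
  rw [zero_div] at h
  refine h.congr' ?_
  filter_upwards [eventually_gt_atTop 0] with x hx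
  have hΓ := (Gamma_pos_of_pos (add_pos hx ha0)).ne'
  have hpow : x ^ (-a) * x = x ^ (1 - a) := by
    rw [← rpow_add_one hx.ne', neg_add_eq_sub]
  have hΓ1 := (Gamma_pos_of_pos hx).ne'
  rw [Pi.div_apply, Gamma_add_one hx.ne', div_eq_div_iff (by positivity) hΓ, ← hpow]
  field_simp

/-- Finite-product approximation of `Gamma s / Gamma (s + a)`, a quotient of two truncated Euler
products. -/
noncomputable def ksApprox (a : ℝ) (N : ℕ) (s : ℝ) : ℝ :=
  N ^ (1 - a) / s * ∏ j ∈ range N, ((s + a + j) / (s + 1 + j))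

variable {s : ℝ}

lemma ksApprox_nonneg (ha0 : 0 ≤ a) (hs : 0 < s) (N : ℕ) : 0 ≤ ksApprox a N s := by
  unfold ksApprox; positivity

lemma ksApprox_eq (ha0 : 0 ≤ a) (hs : 0 < s) (N : ℕ) :
    ksApprox a N s = Gamma s / Gamma (s + a) *
      (N ^ (1 - a) * (Gamma (s + N + a) / Gamma (s + N + 1))) := by
  have hΓ := (Gamma_pos_of_pos hs).ne'
  rw [ksApprox, prod_div_distrib, prod_range_add_eq_Gamma_div (by positivity),
    prod_range_add_eq_Gamma_div (by positivity), Gamma_add_one hs.ne', add_right_comm s a,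
    add_right_comm s 1]
  field_simp

lemma ksApprox_le (ha0 : 0 ≤ a) (ha1 : a ≤ 1) (hs : 0 < s) (N : ℕ) :
    ksApprox a N s ≤ Gamma s / Gamma (s + a) := by
  rw [ksApprox_eq ha0 hs]
  refine mul_le_of_le_one_right (by positivity) ?_
  calc (N : ℝ) ^ (1 - a) * (Gamma (s + N + a) / Gamma (s + N + 1))
      ≤ (s + N) ^ (1 - a) * (Gamma (s + N + a) / Gamma (s + N + 1)) := by
        gcongr
        linarith
    _ ≤ 1 := rpow_mul_Gamma_div_Gamma_le_one ha0 ha1 (by positivity)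

lemma tendsto_ksApprox (ha0 : 0 ≤ a) (ha1 : a ≤ 1) (hs : 0 < s) :
    Tendsto (fun N => ksApprox a N s) atTop (𝓝 (Gamma s / Gamma (s + a))) := by
  have hshift : Tendsto (fun N : ℕ => s + (N : ℝ)) atTop atTop :=
    tendsto_atTop_add_const_left _ s tendsto_natCast_atTop_atTop
  have hratio : Tendsto (fun N : ℕ => ((N : ℝ) / (s + N)) ^ (1 - a)) atTop (𝓝 1) := by
    have h : Tendsto (fun N : ℕ => (N : ℝ) / (s + N)) atTop (𝓝 1) := by
      simpa only [add_comm s] using tendsto_natCast_div_add_atTop s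
    simpa only [one_rpow] using h.rpow_const (p := 1 - a) (.inl one_ne_zero)
  have h := (hratio.mul ((tendsto_rpow_mul_Gamma_div_Gamma ha0 ha1).comp hshift)).const_mul
    (Gamma s / Gamma (s + a))
  rw [mul_one, mul_one] at h
  refine h.congr fun N => ?_
  have hsN : 0 < s + N := by positivity
  rw [ksApprox_eq ha0 hs, Function.comp_apply, ← mul_assoc (_ ^ _),
    ← mul_rpow (by positivity) hsN.le, div_mul_cancel₀ _ hsN.ne']

end GammaRatio

section KilbasSaigoCoeff

/-- The coefficients of the Kilbas–Saigo function `E_{a,m,l}`, with step `δ = a * m` and offset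
`β = 1 + a * l`. -/
noncomputable def ksCoeff (a δ β : ℝ) (n : ℕ) : ℝ :=
  ∏ k ∈ range n, (Gamma (β + k * δ) / Gamma (β + k * δ + a))

variable {a δ β : ℝ}

lemma ksCoeff_zero : ksCoeff a δ β 0 = 1 := prod_range_zero _

lemma ksCoeff_succ (n : ℕ) :
    ksCoeff a δ β (n + 1) = Gamma β / Gamma (β + a) * ksCoeff a δ (β + δ) n := by
  rw [ksCoeff, prod_range_succ', mul_comm, ksCoeff]
  congr 1
  · simp
  · refine prod_congr rfl fun k _ => ?_
    rw [show β + δ + k * δ = β + (k + 1 : ℕ) * δ by push_cast; ring]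

lemma ksCoeff_add (ha0 : 0 ≤ a) (hβ : 0 < β) (n : ℕ) :
    ksCoeff a δ (β + δ) n = ksCoeff a δ β n *
      (Gamma (β + n * δ) / Gamma (β + a + n * δ) * (Gamma (β + a) / Gamma β)) := by
  have hΓ := (Gamma_pos_of_pos hβ).ne'
  have hΓa := (Gamma_pos_of_pos (add_pos_of_pos_of_nonneg hβ ha0)).ne'
  have hsucc : ksCoeff a δ β (n + 1) = ksCoeff a δ β n * _ := prod_range_succ _ n
  rw [ksCoeff_succ, add_right_comm β] at hsucc
  rw [← mul_assoc, ← hsucc]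
  field_simp

lemma isEntire_ksCoeff (ha0 : 0 < a) (ha1 : a ≤ 1) (hδ : 0 < δ) : IsEntire (ksCoeff a δ β) :=
  isEntire_prod <| (tendsto_Gamma_div_Gamma_add ha0 ha1).comp <|
    tendsto_atTop_add_const_left _ β <| tendsto_natCast_atTop_atTop.atTop_mul_const hδ

lemma altSeries_ksCoeff (ha0 : 0 < a) (ha1 : a ≤ 1) (hδ : 0 < δ) (x : ℝ) :
    altSeries (ksCoeff a δ β) x =
      1 - x * (Gamma β / Gamma (β + a) * altSeries (ksCoeff a δ (β + δ)) x) := by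
  rw [(isEntire_ksCoeff ha0 ha1 hδ).altSeries_eq_sub, ksCoeff_zero]
  simp only [ksCoeff_succ, altSeries_const_mul]

lemma prod_ksApprox (hδ : 0 < δ) (hβ : 0 < β) (N n : ℕ) :
    ∏ k ∈ range n, ksApprox a N (β + k * δ) =
      ((N : ℝ) ^ (1 - a) / δ) ^ n / n.factorial * (∏ k ∈ range n, ((1 + k) / (β / δ + k))) *
        ∏ j ∈ range N, ∏ k ∈ range n, (((β + a + j) / δ + k) / ((β + 1 + j) / δ + k)) := by
  have hfact : (n.factorial : ℝ) = ∏ k ∈ range n, (1 + k : ℝ) := by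
    rw [← prod_range_add_one_eq_factorial]
    push_cast
    exact prod_congr rfl fun k _ => add_comm _ _
  have hhead : ((N : ℝ) ^ (1 - a) / δ) ^ n / n.factorial *
      ∏ k ∈ range n, ((1 + k) / (β / δ + k)) = ∏ k ∈ range n, (N ^ (1 - a) / (β + k * δ)) := by
    rw [hfact, pow_eq_prod_const, ← prod_div_distrib, ← prod_mul_distrib]
    refine prod_congr rfl fun k _ => ?_
    field_simp
  rw [hhead, Finset.prod_comm, ← prod_mul_distrib]
  refine prod_congr rfl fun k _ => ?_
  rw [ksApprox]
  congr 1
  refine prod_congr rfl fun j _ => ?_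
  have hscale (c : ℝ) : β + k * δ + c + j = ((β + c + j) / δ + k) * δ := by
    field_simp
    ring
  rw [hscale, hscale, mul_div_mul_right _ _ hδ.ne']

lemma convexDecay_prod_ksApprox (ha0 : 0 < a) (ha1 : a ≤ 1) (hδ : 0 < δ) (hβ : δ ≤ β) (N : ℕ) :
    ConvexDecay fun n => ∏ k ∈ range n, ksApprox a N (β + k * δ) := by
  have hβ0 : 0 < β := hδ.trans_le hβ
  simp only [prod_ksApprox hδ hβ0]
  refine ((convexDecay_pow_div_factorial (by positivity)).mul_isMomentSeq
    (isMomentSeq_prod one_pos ((one_le_div hδ).2 hβ))).mul_prod_isMomentSeq (fun j => ?_) N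
  exact isMomentSeq_prod (by positivity) (by gcongr)

lemma convexDecay_ksCoeff (ha0 : 0 < a) (ha1 : a ≤ 1) (hδ : 0 < δ) (hβ : δ ≤ β) :
    ConvexDecay (ksCoeff a δ β) := by
  have hpos (k : ℕ) : 0 < β + k * δ := by have := hδ.trans_le hβ; positivity
  refine .of_tendsto (convexDecay_prod_ksApprox ha0 ha1 hδ hβ) (isEntire_ksCoeff ha0 ha1 hδ)
    (fun N n => ?_) fun n => tendsto_finsetProd _ fun k _ => tendsto_ksApprox ha0.le ha1 (hpos k)
  rw [abs_of_nonneg (prod_nonneg fun k _ => ksApprox_nonneg ha0.le (hpos k) N)]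
  exact prod_le_prod (fun k _ => ksApprox_nonneg ha0.le (hpos k) N)
    fun k _ => ksApprox_le ha0.le ha1 (hpos k) N

lemma tendsto_altSeries_ksCoeff_of_le (ha0 : 0 < a) (ha1 : a ≤ 1) (hδ : 0 < δ) (hβ : δ ≤ β) :
    Tendsto (altSeries (ksCoeff a δ β)) atTop (𝓝 0) := by
  have hβ0 : 0 < β := hδ.trans_le hβ
  have hF := convexDecay_ksCoeff ha0 ha1 hδ hβ
  have hr : 0 < Gamma β / Gamma (β + a) :=
    div_pos (Gamma_pos_of_pos hβ0) (Gamma_pos_of_pos (by positivity))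
  have hM := isMomentSeq_Gamma_div_Gamma hβ0 (le_add_of_nonneg_right ha0.le : β ≤ β + a) hδ.le
  refine squeeze_zero' ?_ ?_ (tendsto_inv_atTop_zero.mul_const (Gamma β / Gamma (β + a))⁻¹ |>.trans
    (by rw [zero_mul]))
  all_goals filter_upwards [eventually_gt_atTop 0] with x hx
  · exact hF.nonneg x hx.le
  have hle : altSeries (ksCoeff a δ β) x ≤ altSeries (ksCoeff a δ (β + δ)) x := by
    rw [funext (ksCoeff_add ha0.le hβ0)]
    exact hF.le_altSeries_mul hM hx.le
  have hrec := altSeries_ksCoeff (β := β) ha0 ha1 hδ x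
  rw [← mul_inv, ← one_div, le_div_iff₀ (mul_pos hx hr)]
  calc altSeries (ksCoeff a δ β) x * (x * (Gamma β / Gamma (β + a)))
      ≤ altSeries (ksCoeff a δ (β + δ)) x * (x * (Gamma β / Gamma (β + a))) := by gcongr
    _ = 1 - altSeries (ksCoeff a δ β) x := by rw [hrec]; ring
    _ ≤ 1 := sub_le_self 1 (hF.nonneg x hx.le)

lemma ksCoeff_eq_one_add_mul (ha0 : 0 ≤ a) (hδ : 0 ≤ δ) (hβ : 0 < β) (n : ℕ) :
    ksCoeff a δ β n = (1 + n * (δ / β)) * (ksCoeff a δ (β + δ) n *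
      (Gamma (β + a + n * δ) / Gamma (β + 1 + n * δ) * (Gamma (β + 1) / Gamma (β + a)))) := by
  have hβn : 0 < β + n * δ := by positivity
  have hΓ := (Gamma_pos_of_pos hβ).ne'
  have hΓa : Gamma (β + a) ≠ 0 := (Gamma_pos_of_pos (by positivity)).ne'
  have hΓn := (Gamma_pos_of_pos hβn).ne'
  have hΓan : Gamma (β + a + n * δ) ≠ 0 := (Gamma_pos_of_pos (by positivity)).ne'
  rw [ksCoeff_add ha0 hβ, add_right_comm β 1, Gamma_add_one hβ.ne', Gamma_add_one hβn.ne']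
  field_simp

lemma tendsto_altSeries_ksCoeff (ha0 : 0 < a) (ha1 : a ≤ 1) (hδ : 0 < δ) (hβ : 0 < β) :
    Tendsto (altSeries (ksCoeff a δ β)) atTop (𝓝 0) := by
  have hδβ : δ ≤ β + δ := le_add_of_nonneg_left hβ.le
  have hM := isMomentSeq_Gamma_div_Gamma (add_pos hβ ha0) (by gcongr : β + a ≤ β + 1) hδ.le
  have hF := convexDecay_ksCoeff ha0 ha1 hδ hδβ
  have hG := hF.mul_isMomentSeq hM
  have hG0 := hF.tendsto_altSeries_mul hM (tendsto_altSeries_ksCoeff_of_le ha0 ha1 hδ hδβ)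
  have hG' := tendsto_mul_deriv_of_convexOn hG.convexOn
    (fun x _ => (hG.isEntire.hasDerivAt_altSeries x).differentiableAt) hG0
  have hlim := hG0.add (hG'.const_mul (δ / β))
  rw [mul_zero, add_zero] at hlim
  refine hlim.congr fun x => ?_
  rw [funext (ksCoeff_eq_one_add_mul ha0.le hδ.le hβ), hG.isEntire.altSeries_one_add_mul]

lemma tendsto_mul_altSeries_ksCoeff (ha0 : 0 < a) (ha1 : a ≤ 1) (hδ : 0 < δ) (hβ : 0 < β) :
    Tendsto (fun x => x * altSeries (ksCoeff a δ (β + δ)) x) atTop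
      (𝓝 (Gamma (β + a) / Gamma β)) := by
  have hlim := ((tendsto_altSeries_ksCoeff ha0 ha1 hδ hβ).const_sub 1).const_mul
    (Gamma (β + a) / Gamma β)
  rw [sub_zero, mul_one] at hlim
  refine hlim.congr fun x => ?_
  have hΓ := (Gamma_pos_of_pos hβ).ne'
  have hΓa := (Gamma_pos_of_pos (add_pos hβ ha0)).ne'
  rw [altSeries_ksCoeff ha0 ha1 hδ]
  field_simp
  ring

end KilbasSaigoCoeff

end KilbasSaigo

theorem kilbasSaigo_asymptotics_general (a m l : ℝ) (ha0 : 0 < a) (ha1 : a ≤ 1)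
    (hm : 0 < m) (hl : m - 1 / a < l) :
    Filter.Tendsto
      (fun x : ℝ => x * ∑' n : ℕ, (∏ k ∈ Finset.range n,
        Real.Gamma (1 + a * (k * m + l)) /
          Real.Gamma (1 + a * (k * m + l + 1))) * (-x) ^ n)
      Filter.atTop
      (nhds (Real.Gamma (1 + a * (l + 1 - m)) / Real.Gamma (1 + a * (l - m)))) := by
  have hβ : 0 < 1 + a * (l - m) := by
    have : a * (m - 1 / a) < a * l := by gcongr
    rw [mul_sub, mul_one_div_cancel ha0.ne'] at this
    linarith
  convert KilbasSaigo.tendsto_mul_altSeries_ksCoeff ha0 ha1 (mul_pos ha0 hm) hβ using 4 with x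
  · refine tsum_congr fun n => congrArg (· * _) (prod_congr rfl fun k _ => ?_)
    ring_nf
  · ring

/-- Asymptotics of the Kilbas–Saigo function on the negative real axis:
for `a ∈ (0,1)`, `m > 0`, `l > m - 1/a`,
`x · E_{a,m,l}(-x) → Γ(1+a(l+1-m))/Γ(1+a(l-m))` as `x → ∞`. -/
theorem kilbasSaigo_asymptotics (a m l : ℝ) (ha0 : 0 < a) (ha1 : a < 1)
    (hm : 0 < m) (hl : m - 1 / a < l) :
    Filter.Tendsto
      (fun x : ℝ => x * ∑' n : ℕ, (∏ k ∈ Finset.range n,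
        Real.Gamma (1 + a * (k * m + l)) /
          Real.Gamma (1 + a * (k * m + l + 1))) * (-x) ^ n)
      Filter.atTop
      (nhds (Real.Gamma (1 + a * (l + 1 - m)) / Real.Gamma (1 + a * (l - m)))) :=
  kilbasSaigo_asymptotics_general a m l ha0 ha1.le hm hl
end
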